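/- For every α with 2 < α < 4, the Hausdorff dimension of the Koch curve K_α, the unique nonempty compact subset of ℂ satisfying K_α = ⋃_{i=1}^4 ψᵢ(K_α), equals d_f = (log 4)/(log α). -/

import Mathlib

/-- The rotation angle `θ(α) = arcsin(√(α(4-α))/2)` of the Koch-type family. -/
noncomputable def theta (α : ℝ) : ℝ := Real.arcsin (Real.sqrt (α * (4 - α)) / 2)

/-- The four contractive similitudes `ψ_{i,α}` of the Koch-type family, on `ℂ ≅ ℝ²`. -/
noncomputable def psi (α : ℝ) : Fin 4 → ℂ → ℂ
  | 0 => fun z => z / α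
  | 1 => fun z => (z / α) * Complex.exp (theta α * Complex.I) + 1 / α
  | 2 => fun z => (z / α) * Complex.exp (-(theta α) * Complex.I) + 1 / 2 +
      Complex.I * Real.sqrt (1 / α - 1 / 4)
  | 3 => fun z => (z - 1) / α + 1

open MeasureTheory Set Filter Topology
open scoped ENNReal NNReal

noncomputable def kg (a h : ℝ) : Fin 4 → ℂ → ℂ
  | 0 => fun z => ⟨a * z.re, a * z.im⟩
  | 1 => fun z => ⟨a + (1/2 - a) * z.re - h * z.im, h * z.re + (1/2 - a) * z.im⟩
  | 2 => fun z => ⟨1/2 + (1/2 - a) * z.re + h * z.im, h - h * z.re + (1/2 - a) * z.im⟩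
  | 3 => fun z => ⟨1 - a + a * z.re, a * z.im⟩

lemma psi_eq_kg (α : ℝ) (h2 : 2 < α) (h4 : α < 4) (i : Fin 4) :
    psi α i = kg (1/α) (Real.sqrt (1/α - 1/4)) i := by
  have hs : Real.sqrt (α * (4 - α)) / 2 = α * Real.sqrt (1/α - 1/4) := by
    have : α * (4 - α) = (2 * α)^2 * (1/α - 1/4) := by field_simp; ring
    rw [this, Real.sqrt_mul (by positivity), Real.sqrt_sq (by positivity)]; ring
  have hq : 0 ≤ α * (4 - α) := by nlinarith
  have hsin : Real.sin (theta α) = α * Real.sqrt (1/α - 1/4) := by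
    rw [theta, Real.sin_arcsin, hs]
    · have := Real.sqrt_nonneg (α * (4 - α)); linarith
    · have : Real.sqrt (α * (4 - α)) ≤ 2 := by
        rw [Real.sqrt_le_left (by norm_num)]; nlinarith [sq_nonneg (α - 2)]
      linarith
  have hcos : Real.cos (theta α) = α / 2 - 1 := by
    rw [theta, Real.cos_arcsin, div_pow, Real.sq_sqrt hq]
    have : 1 - α * (4 - α) / 2 ^ 2 = (α / 2 - 1)^2 := by ring
    rw [this, Real.sqrt_sq (by linarith)]
  have he : Complex.exp (theta α * Complex.I) = ⟨α / 2 - 1, α * Real.sqrt (1/α - 1/4)⟩ := by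
    apply Complex.ext
    · rw [Complex.exp_ofReal_mul_I_re, hcos]
    · rw [Complex.exp_ofReal_mul_I_im, hsin]
  have he' : Complex.exp (-(theta α) * Complex.I) = ⟨α / 2 - 1, -(α * Real.sqrt (1/α - 1/4))⟩ := by
    rw [← Complex.ofReal_neg]
    apply Complex.ext
    · rw [Complex.exp_ofReal_mul_I_re, Real.cos_neg, hcos]
    · rw [Complex.exp_ofReal_mul_I_im, Real.sin_neg, hsin]
  have h0 : α ≠ 0 := by linarith
  have h1 : (1 / (α:ℂ)) = ((1/α : ℝ) : ℂ) := by push_cast; rfl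
  have hd : ∀ z : ℂ, z / (α:ℂ) = ⟨z.re / α, z.im / α⟩ := by
    intro z
    apply Complex.ext <;> simp [Complex.div_ofReal_re, Complex.div_ofReal_im]
  generalize hh : Real.sqrt (1/α - 1/4) = h at *
  funext z
  fin_cases i
  · simp only [psi, kg, hd]; apply Complex.ext <;> simp <;> ring
  · simp only [psi, kg, he, hd]
    apply Complex.ext <;> simp <;> field_simp <;> ring
  · simp only [psi, kg, he', hd, hh]
    apply Complex.ext <;> simp <;> field_simp <;> ring
  · simp only [psi, kg, hd]; apply Complex.ext <;> simp <;> field_simp <;> ring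

def Tri (h : ℝ) (z : ℂ) : Prop := 0 ≤ z.im ∧ z.im ≤ 2 * h * z.re ∧ z.im ≤ 2 * h * (1 - z.re)

structure Good (a h : ℝ) : Prop where
  h0 : 0 < h
  a4 : 1/4 < a
  a2 : a < 1/2
  hh : h ^ 2 = a - 1/4

lemma Good.h2 {a h : ℝ} (H : Good a h) : h < 1/2 := by
  obtain ⟨h0, a4, a2, hh⟩ := H; nlinarith

lemma Tri.re0 {a h : ℝ} (H : Good a h) {z : ℂ} (hz : Tri h z) : 0 ≤ z.re := by
  obtain ⟨h0, a4, a2, hh⟩ := H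
  obtain ⟨h1, h2, h3⟩ := hz
  by_contra hc; push Not at hc; nlinarith

lemma Tri.re1 {a h : ℝ} (H : Good a h) {z : ℂ} (hz : Tri h z) : z.re ≤ 1 := by
  obtain ⟨h0, a4, a2, hh⟩ := H
  obtain ⟨h1, h2, h3⟩ := hz
  by_contra hc; push Not at hc; nlinarith

lemma kg_tri {a h : ℝ} (H : Good a h) {z : ℂ} (hz : Tri h z) (i : Fin 4) : Tri h (kg a h i z) := by
  have x0 := hz.re0 H
  have x1 := hz.re1 H
  obtain ⟨h0, a4, a2, hh⟩ := H
  obtain ⟨h1, h2, h3⟩ := hz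
  obtain ⟨x, y⟩ := z
  simp only at *
  have e : ∀ t, h * (h * t) = (a - 1/4) * t := by intro t; rw [← hh]; ring
  have A1 : 0 ≤ a * (2 * h * x - y) := mul_nonneg (by linarith) (by linarith)
  have A2 : 0 ≤ a * (2 * h * (1 - x) - y) := mul_nonneg (by linarith) (by linarith)
  have A3 : 0 ≤ h * (1 - x) := mul_nonneg h0.le (by linarith)
  have A4 : 0 ≤ h * x := mul_nonneg h0.le (by linarith)
  have A5 : 0 ≤ a * y := mul_nonneg (by linarith) (by linarith)
  have A6 : 0 ≤ (1 - 2 * a) * y := mul_nonneg (by linarith) (by linarith)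
  have A7 : 0 ≤ (1 - 2 * a) * (h * (1 - x)) := mul_nonneg (by linarith) A3
  have A8 : 0 ≤ (1 - 2 * a) * (h * x) := mul_nonneg (by linarith) A4
  have A9 : 0 ≤ (1 - 2 * a) * (2 * h * (1 - x) - y) := mul_nonneg (by linarith) (by linarith)
  have A10 : 0 ≤ (1 - 2 * a) * (2 * h * x - y) := mul_nonneg (by linarith) (by linarith)
  have ey := e y
  fin_cases i <;> simp only [kg, Tri] <;> refine ⟨?_, ?_, ?_⟩ <;> nlinarith

lemma dist_kg {a h : ℝ} (H : Good a h) (i : Fin 4) (z w : ℂ) :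
    ‖kg a h i z - kg a h i w‖ = a * ‖z - w‖ := by
  obtain ⟨h0, a4, a2, hh⟩ := H
  have : ‖kg a h i z - kg a h i w‖ ^ 2 = (a * ‖z - w‖) ^ 2 := by
    rw [mul_pow, Complex.sq_norm, Complex.sq_norm, Complex.normSq_apply, Complex.normSq_apply]
    have hh' : h ^ 2 = a - 1/4 := hh
    fin_cases i <;> simp only [kg, Complex.sub_re, Complex.sub_im]
    · ring
    · linear_combination ((z.re - w.re)^2 + (z.im - w.im)^2) * hh
    · linear_combination ((z.re - w.re)^2 + (z.im - w.im)^2) * hh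
    · ring
  exact (pow_left_inj₀ (norm_nonneg _) (by positivity) two_ne_zero).1 this

lemma lin_le_norm (l m : ℝ) (hl : l ^ 2 + m ^ 2 ≤ 1) (z : ℂ) : l * z.re + m * z.im ≤ ‖z‖ := by
  refine le_of_sq_le_sq ?_ (norm_nonneg _)
  rw [Complex.sq_norm, Complex.normSq_apply]
  nlinarith [sq_nonneg (l * z.im - m * z.re), sq_nonneg z.re, sq_nonneg z.im]

lemma Tri.norm_le {a h : ℝ} (H : Good a h) {z : ℂ} (hz : Tri h z) : ‖z‖ ≤ 2 * z.re := by
  have x0 := hz.re0 H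
  have := H.h2
  have := Complex.norm_le_abs_re_add_abs_im z
  rw [abs_of_nonneg x0, abs_of_nonneg hz.1] at this
  have := hz.2.1
  nlinarith

lemma Tri.norm_le' {a h : ℝ} (H : Good a h) {z : ℂ} (hz : Tri h z) :
    ‖z - 1‖ ≤ 2 * (1 - z.re) := by
  have x0 := hz.re1 H
  have := H.h2
  have := Complex.norm_le_abs_re_add_abs_im (z - 1)
  simp only [Complex.sub_re, Complex.sub_im, Complex.one_re, Complex.one_im, sub_zero] at this
  rw [abs_of_nonpos (by linarith), abs_of_nonneg hz.1] at this
  have := hz.2.2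
  nlinarith

lemma sep_far {a h : ℝ} (H : Good a h) {z w : ℂ} (hz : Tri h z) (hw : Tri h w) (i j : Fin 4)
    (hij : i.val + 1 < j.val) : 1/2 - a ≤ ‖kg a h i z - kg a h j w‖ := by
  have z0 := hz.re0 H
  have z1 := hz.re1 H
  have w0 := hw.re0 H
  have w1 := hw.re1 H
  obtain ⟨h0, a4, a2, hh⟩ := H
  have hz1 := hz.1
  have hw1 := hw.1
  have hz2 := mul_nonneg h0.le hz1
  have hw2 := mul_nonneg h0.le hw1
  refine le_trans ?_ (lin_le_norm (-1) 0 (by norm_num) _)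
  fin_cases i <;> fin_cases j <;> simp at hij <;> simp only [kg, Complex.sub_re] <;> nlinarith

lemma sep_near {a h : ℝ} (H : Good a h) {z w : ℂ} (hz : Tri h z) (hw : Tri h w) (i j : Fin 4)
    (hij : i.val + 1 = j.val) :
    (1/2 - a) * (a * ‖z - 1‖ + a * ‖w‖) ≤ ‖kg a h i z - kg a h j w‖ := by
  have z0 := hz.re0 H
  have z1 := hz.re1 H
  have w0 := hw.re0 H
  have w1 := hw.re1 H
  have nz := hz.norm_le' H
  have nw := hw.norm_le H
  obtain ⟨h0, a4, a2, hh⟩ := H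
  obtain ⟨hz1, hz2, hz3⟩ := hz
  obtain ⟨hw1, hw2, hw3⟩ := hw
  have key : (1/2 - a) * (a * ‖z - 1‖ + a * ‖w‖) ≤ (1/2 - a) * (2 * a * ((1 - z.re) + w.re)) := by
    apply mul_le_mul_of_nonneg_left _ (by linarith)
    nlinarith
  refine key.trans ?_
  have e1 : 0 ≤ a * h * (2 * h * (1 - z.re) - z.im) :=
    mul_nonneg (by nlinarith) (by linarith)
  have e2 : 0 ≤ a * h * (2 * h * w.re - w.im) :=
    mul_nonneg (by nlinarith) (by linarith)
  have e1' : 0 ≤ a * (2 * (a - 1/4) * (1 - z.re)) - a * h * z.im := by rw [← hh]; linarith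
  have e2' : 0 ≤ a * (2 * (a - 1/4) * w.re) - a * h * w.im := by rw [← hh]; linarith
  have hh' : h * h = a - 1/4 := by rw [← hh]; ring
  fin_cases i <;> fin_cases j <;> simp at hij
  · refine le_trans ?_ (lin_le_norm (-1/2) (-h) (by nlinarith) _)
    simp only [kg, Complex.sub_re, Complex.sub_im]
    have q1 : h * (h * w.re) = (a - 1/4) * w.re := by rw [← hh]; ring
    nlinarith
  · refine le_trans ?_ (lin_le_norm (-1) 0 (by norm_num) _)
    simp only [kg, Complex.sub_re, Complex.sub_im]
    have := mul_nonneg h0.le hz1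
    have := mul_nonneg h0.le hw1
    have q : 0 ≤ (1/2 - a) * ((1 - 2 * a) * ((1 - z.re) + w.re)) :=
      mul_nonneg (by linarith) (mul_nonneg (by linarith) (by linarith))
    nlinarith
  · refine le_trans ?_ (lin_le_norm (-1/2) h (by nlinarith) _)
    simp only [kg, Complex.sub_re, Complex.sub_im]
    have q1 : h * (h * z.re) = (a - 1/4) * z.re := by rw [← hh]; ring
    nlinarith

lemma K_tri {a h : ℝ} (H : Good a h) {K : Set ℂ} (hc : IsCompact K)
    (hK : K = ⋃ i : Fin 4, kg a h i '' K) {z : ℂ} (hz : z ∈ K) : Tri h z := by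
  set S : Set ℂ := {z | Tri h z} with hS
  have hSc : IsClosed S := by
    have e : S = {z : ℂ | 0 ≤ z.im} ∩ ({z : ℂ | z.im ≤ 2 * h * z.re} ∩
        {z : ℂ | z.im ≤ 2 * h * (1 - z.re)}) := by
      ext z; simp [hS, Tri]
    rw [e]
    refine IsClosed.inter ?_ (IsClosed.inter ?_ ?_)
    · exact isClosed_le (by fun_prop) (by fun_prop)
    · exact isClosed_le (by fun_prop) (by fun_prop)
    · exact isClosed_le (by fun_prop) (by fun_prop)
  have hSn : S.Nonempty := ⟨0, by have := H.h0; simp [hS, Tri]; linarith⟩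
  obtain ⟨m, hm, hmax⟩ := hc.exists_isMaxOn ⟨z, hz⟩
    (Metric.continuous_infDist_pt S).continuousOn
  have hm' := hm
  rw [hK] at hm'
  obtain ⟨i, y, hy, rfl⟩ := mem_iUnion.1 hm'
  have h1 : Metric.infDist (kg a h i y) S ≤ a * Metric.infDist y S := by
    obtain ⟨s, hs, hsy⟩ := hSc.exists_infDist_eq_dist hSn y
    rw [hsy, dist_eq_norm, ← dist_kg H i, ← dist_eq_norm]
    exact Metric.infDist_le_dist_of_mem (kg_tri H hs i)
  have h2 : Metric.infDist y S ≤ Metric.infDist (kg a h i y) S := hmax hy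
  have h3 : Metric.infDist z S ≤ Metric.infDist (kg a h i y) S := hmax hz
  have h4 : 0 ≤ Metric.infDist y S := Metric.infDist_nonneg
  have h5 : 0 ≤ Metric.infDist z S := Metric.infDist_nonneg
  have : Metric.infDist z S = 0 := by
    have := H.a2; have := H.a4; nlinarith
  exact (hSc.mem_iff_infDist_zero hSn).2 this

lemma exists_gamma {a h : ℝ} (H : Good a h) {K : Set ℂ} (hn : K.Nonempty) (hc : IsCompact K)
    (hK : K = ⋃ i : Fin 4, kg a h i '' K) :
    ∃ γ : ℝ → ℂ, (∀ t, γ t ∈ K) ∧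
      ∀ i : Fin 4, ∀ s ∈ Ico (0:ℝ) 1, γ (((i.val : ℝ) + s) / 4) = kg a h i (γ s) := by
  obtain ⟨x0, hx0⟩ := hn
  have hmaps : ∀ i, ∀ z ∈ K, kg a h i z ∈ K := by
    intro i z hz; rw [hK]; exact mem_iUnion.2 ⟨i, z, hz, rfl⟩
  let dg : ℝ → Fin 4 := fun t => Fin.ofNat 4 ⌊4 * t⌋₊
  let G : ℕ → ℝ → ℂ := fun n => Nat.rec (fun _ => x0)
    (fun _ g t => kg a h (dg t) (g (Int.fract (4 * t)))) n
  have G0 : ∀ t, G 0 t = x0 := fun t => rfl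
  have GS : ∀ n t, G (n + 1) t = kg a h (dg t) (G n (Int.fract (4 * t))) := fun n t => rfl
  have GK : ∀ n t, G n t ∈ K := by
    intro n
    induction n with
    | zero => intro t; exact hx0
    | succ n ih => intro t; rw [GS]; exact hmaps _ _ (ih _)
  have ha0 : 0 < a := by have := H.a4; linarith
  have hcau : ∀ n t, dist (G n t) (G (n+1) t) ≤ Metric.diam K * a ^ n := by
    intro n
    induction n with
    | zero => intro t; simpa using Metric.dist_le_diam_of_mem hc.isBounded (GK 0 t) (GK 1 t)
    | succ n ih =>
      intro t
      rw [GS, GS (n+1), dist_eq_norm, dist_kg H, ← dist_eq_norm, pow_succ]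
      have := mul_le_mul_of_nonneg_left (ih (Int.fract (4 * t))) ha0.le
      linarith
  have hcs : ∀ t, ∃ l ∈ K, Tendsto (fun n => G n t) atTop (𝓝 l) := by
    intro t
    exact cauchySeq_tendsto_of_isComplete hc.isComplete (fun n => GK n t)
      (cauchySeq_of_le_geometric a _ (by have := H.a2; linarith) (fun n => hcau n t))
  choose γ hγ hlim using hcs
  refine ⟨γ, hγ, ?_⟩
  intro i s hs
  have hfl : (4 * (((i.val : ℝ) + s) / 4)) = s + (i.val : ℕ) := by ring
  have e1 : Int.fract (4 * (((i.val : ℝ) + s) / 4)) = s := by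
    rw [hfl, Int.fract_add_natCast, Int.fract_eq_self.2 hs]
  have e2 : dg (((i.val : ℝ) + s) / 4) = i := by
    simp only [dg]
    rw [hfl, Nat.floor_add_natCast hs.1, Nat.floor_eq_zero.2 hs.2, zero_add]
    apply Fin.ext
    simp [Fin.ofNat, Nat.mod_eq_of_lt i.2]
  have t1 := (hlim (((i.val : ℝ) + s) / 4)).comp (tendsto_add_atTop_nat 1)
  have hcont : Continuous (kg a h i) := by
    apply LipschitzWith.continuous (K := ⟨a, ha0.le⟩)
    apply LipschitzWith.of_dist_le_mul
    intro x y
    rw [dist_eq_norm, dist_kg H, ← dist_eq_norm]; rfl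
  have t2 := (hcont.tendsto _).comp (hlim s)
  refine tendsto_nhds_unique t1 (t2.congr ?_)
  intro n
  simp only [Function.comp, GS, e1, e2]

lemma digit (t : ℝ) (ht : t ∈ Ico (0:ℝ) 1) :
    ∃ i : Fin 4, ∃ s ∈ Ico (0:ℝ) 1, t = ((i.val : ℝ) + s) / 4 := by
  have h4 : ⌊4 * t⌋₊ < 4 := by
    rw [Nat.floor_lt (by linarith [ht.1])]; push_cast; linarith [ht.2]
  refine ⟨⟨_, h4⟩, 4 * t - ⌊4 * t⌋₊, ⟨?_, ?_⟩, ?_⟩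
  · linarith [Nat.floor_le (show 0 ≤ 4 * t by linarith [ht.1])]
  · linarith [Nat.lt_floor_add_one (4 * t)]
  · simp

set_option linter.unusedSectionVars false
section holder
variable {a h d : ℝ} (H : Good a h) (hd : 0 < d) (had : a ^ d = 1/4) {γ : ℝ → ℂ}
  (hT : ∀ t, Tri h (γ t))
  (hγ : ∀ i : Fin 4, ∀ s ∈ Ico (0:ℝ) 1, γ (((i.val : ℝ) + s) / 4) = kg a h i (γ s))
include H hd had hT hγ

lemma small_exp (C : ℝ) {x r : ℝ} (hr : 0 ≤ r) (hx : x ≤ C * r ^ d) :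
    x / 4 ≤ C * (a * r) ^ d := by
  rw [Real.mul_rpow (by have := H.a4; linarith) hr, had]; linarith

lemma end0 (n : ℕ) : ∀ t ∈ Ico (0:ℝ) 1, (1/4:ℝ)^n ≤ t →
    t ≤ (((1/2 - a) * a) ^ d)⁻¹ * ‖γ t‖ ^ d := by
  have a4 := H.a4
  have a2 := H.a2
  have hpos : 0 < ((1/2 - a) * a) ^ d := Real.rpow_pos_of_pos (mul_pos (by linarith) (by linarith)) _
  induction n with
  | zero => intro t ht h1; simp at h1; linarith [ht.2]
  | succ n ih =>
    intro t ht h1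
    obtain ⟨i, s, hs, rfl⟩ := digit t ht
    rw [hγ i s hs]
    by_cases hi : i = 0
    · subst hi
      have e : ‖kg a h 0 (γ s)‖ = a * ‖γ s‖ := by
        have := dist_kg H 0 (γ s) 0
        have e0 : kg a h 0 0 = 0 := by apply Complex.ext <;> simp [kg]
        rwa [e0, sub_zero, sub_zero] at this
      rw [e]
      have := small_exp H hd had hT hγ (((1/2 - a) * a) ^ d)⁻¹ (norm_nonneg (γ s))
        (ih s hs (by rw [pow_succ] at h1; simp at h1 ⊢; linarith))
      simpa using this
    · have hT0 : Tri h 0 := by have := H.h0; simp [Tri]; linarith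
      have e0 : kg a h 0 0 = 0 := by apply Complex.ext <;> simp [kg]
      have hm : (1/2 - a) * a ≤ ‖kg a h i (γ s)‖ := by
        rcases lt_or_ge 1 i.val with h2 | h2
        · have := sep_far H hT0 (hT s) 0 i (by simpa using h2)
          rw [e0, zero_sub, norm_neg] at this
          nlinarith
        · have hne : i.val ≠ 0 := fun hh => hi (Fin.ext hh)
          have := sep_near H hT0 (hT s) 0 i (by simp; omega)
          rw [e0, zero_sub, norm_neg, zero_sub, norm_neg, norm_one] at this
          have h3 : 0 ≤ (1/2 - a) * (a * ‖γ s‖) :=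
            mul_nonneg (by linarith) (mul_nonneg (by linarith) (norm_nonneg _))
          nlinarith
      refine ht.2.le.trans ?_
      rw [← div_eq_inv_mul, le_div_iff₀ hpos, one_mul]
      exact Real.rpow_le_rpow (mul_nonneg (by linarith) (by linarith)) hm hd.le

lemma end1 (n : ℕ) : ∀ t ∈ Ico (0:ℝ) 1, (1/4:ℝ)^n < 1 - t →
    1 - t ≤ (((1/2 - a) * a) ^ d)⁻¹ * ‖γ t - 1‖ ^ d := by
  have a4 := H.a4
  have a2 := H.a2
  have hpos : 0 < ((1/2 - a) * a) ^ d := Real.rpow_pos_of_pos (mul_pos (by linarith) (by linarith)) _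
  induction n with
  | zero => intro t ht h1; simp at h1; linarith [ht.1]
  | succ n ih =>
    intro t ht h1
    obtain ⟨i, s, hs, rfl⟩ := digit t ht
    rw [hγ i s hs]
    have e0 : kg a h 3 1 = 1 := by apply Complex.ext <;> simp [kg]
    by_cases hi : i = 3
    · subst hi
      have e : ‖kg a h 3 (γ s) - 1‖ = a * ‖γ s - 1‖ := by
        have := dist_kg H 3 (γ s) 1
        rwa [e0] at this
      rw [e]
      have e3 : (((3 : Fin 4).val : ℕ) : ℝ) = 3 := by norm_num
      rw [e3] at h1 ⊢
      have := small_exp H hd had hT hγ (((1/2 - a) * a) ^ d)⁻¹ (norm_nonneg (γ s - 1))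
        (ih s hs (by rw [pow_succ] at h1; linarith))
      refine le_trans (le_of_eq ?_) this
      ring
    · have hT0 : Tri h 1 := by have := H.h0; simp [Tri]; linarith
      have hm : (1/2 - a) * a ≤ ‖kg a h i (γ s) - 1‖ := by
        have hne : i.val ≠ 3 := fun hh => hi (Fin.ext hh)
        rcases lt_or_ge i.val 2 with h2 | h2
        · have := sep_far H (hT s) hT0 i 3 (by simp; omega)
          rw [e0] at this
          nlinarith
        · have := sep_near H (hT s) hT0 i 3 (by simp; omega)
          rw [e0, norm_one] at this
          have h3 : 0 ≤ (1/2 - a) * (a * ‖γ s - 1‖) :=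
            mul_nonneg (by linarith) (mul_nonneg (by linarith) (norm_nonneg _))
          nlinarith
      have : 1 - ((i.val : ℝ) + s) / 4 ≤ 1 := by linarith [ht.1]
      refine this.trans ?_
      rw [← div_eq_inv_mul, le_div_iff₀ hpos, one_mul]
      exact Real.rpow_le_rpow (mul_nonneg (by linarith) (by linarith)) hm hd.le

lemma end0' : ∀ t ∈ Ico (0:ℝ) 1, t ≤ (((1/2 - a) * a) ^ d)⁻¹ * ‖γ t‖ ^ d := by
  intro t ht
  have a4 := H.a4
  have a2 := H.a2
  have hpos : 0 < ((1/2 - a) * a) ^ d := Real.rpow_pos_of_pos (mul_pos (by linarith) (by linarith)) _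
  rcases ht.1.eq_or_lt with h0 | h0
  · rw [← h0]; positivity
  · obtain ⟨n, hn⟩ := exists_pow_lt_of_lt_one h0 (show (1/4:ℝ) < 1 by norm_num)
    exact end0 H hd had hT hγ n t ht hn.le

lemma end1' : ∀ t ∈ Ico (0:ℝ) 1, 1 - t ≤ (((1/2 - a) * a) ^ d)⁻¹ * ‖γ t - 1‖ ^ d := by
  intro t ht
  obtain ⟨n, hn⟩ := exists_pow_lt_of_lt_one (show 0 < 1 - t by linarith [ht.2])
    (show (1/4:ℝ) < 1 by norm_num)
  exact end1 H hd had hT hγ n t ht hn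

lemma main_n (n : ℕ) : ∀ s ∈ Ico (0:ℝ) 1, ∀ t ∈ Ico (0:ℝ) 1, (1/4:ℝ)^n ≤ t - s →
    t - s ≤ 2 * (((1/2 - a) * a) ^ d)⁻¹ * ((1/2 - a) ^ d)⁻¹ * ‖γ s - γ t‖ ^ d := by
  have a4 := H.a4
  have a2 := H.a2
  have hpos : 0 < ((1/2 - a) * a) ^ d := Real.rpow_pos_of_pos (mul_pos (by linarith) (by linarith)) _
  have hpos2 : 0 < (1/2 - a) ^ d := Real.rpow_pos_of_pos (by linarith) _
  have hle1 : ((1/2 - a) * a) ^ d ≤ 1 := Real.rpow_le_one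
    (mul_nonneg (by linarith) (by linarith)) (by nlinarith) hd.le
  have hge : 1 ≤ (((1/2 - a) * a) ^ d)⁻¹ := (one_le_inv₀ hpos).2 hle1
  induction n with
  | zero => intro s hs t ht h1; simp at h1; linarith [ht.2, hs.1]
  | succ n ih =>
    intro s hs t ht h1
    have hst : 0 < t - s := lt_of_lt_of_le (by positivity) h1
    have hst1 : t - s ≤ 1 := by linarith [ht.2, hs.1]
    obtain ⟨i, s', hs', rfl⟩ := digit s hs
    obtain ⟨j, t', ht', rfl⟩ := digit t ht
    have hij : i.val ≤ j.val := by
      by_contra hc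
      have : (j.val : ℝ) + 1 ≤ i.val := by exact_mod_cast not_le.1 hc
      linarith [ht'.2, hs'.1]
    rw [hγ i s' hs', hγ j t' ht']
    rcases hij.eq_or_lt with he | hlt
    · have : i = j := Fin.ext he
      subst this
      rw [dist_kg H]
      have := small_exp H hd had hT hγ (2 * (((1/2 - a) * a) ^ d)⁻¹ * ((1/2 - a) ^ d)⁻¹)
        (norm_nonneg (γ s' - γ t'))
        (ih s' hs' t' ht' (by rw [pow_succ] at h1; linarith))
      refine le_trans (le_of_eq ?_) this
      ring
    · set N := ‖kg a h i (γ s') - kg a h j (γ t')‖ with hN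
      rcases (Nat.succ_le_of_lt hlt).eq_or_lt with he | hlt2
      · have hs1 := small_exp H hd had hT hγ _ (norm_nonneg (γ s' - 1))
          (end1' H hd had hT hγ s' hs')
        have ht1 := small_exp H hd had hT hγ _ (norm_nonneg (γ t'))
          (end0' H hd had hT hγ t' ht')
        have hsep := sep_near H (hT s') (hT t') i j he
        rw [← hN] at hsep
        have hA : 0 ≤ a * ‖γ s' - 1‖ := mul_nonneg (by linarith) (norm_nonneg _)
        have hB : 0 ≤ a * ‖γ t'‖ := mul_nonneg (by linarith) (norm_nonneg _)
        have hc : 0 < 1/2 - a := by linarith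
        have key : ∀ r, 0 ≤ r → (1/2 - a) * r ≤ N → r ^ d ≤ ((1/2 - a) ^ d)⁻¹ * N ^ d := by
          intro r hr hrN
          rw [← div_eq_inv_mul, le_div_iff₀ hpos2, mul_comm, ← Real.mul_rpow hc.le hr]
          exact Real.rpow_le_rpow (mul_nonneg hc.le hr) hrN hd.le
        have k1 := key _ hA (by nlinarith)
        have k2 := key _ hB (by nlinarith)
        have m1 := mul_le_mul_of_nonneg_left k1 (le_trans zero_le_one hge)
        have m2 := mul_le_mul_of_nonneg_left k2 (le_trans zero_le_one hge)
        have hj : (j.val : ℝ) = i.val + 1 := by exact_mod_cast he.symm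
        rw [hj]
        have : ((i.val : ℝ) + 1 + t') / 4 - (i.val + s') / 4 = (1 - s') / 4 + t' / 4 := by ring
        rw [this]
        refine (add_le_add (hs1.trans m1) (ht1.trans m2)).trans (le_of_eq ?_)
        ring
      · have hsep := sep_far H (hT s') (hT t') i j hlt2
        rw [← hN] at hsep
        have k : 1 ≤ ((1/2 - a) ^ d)⁻¹ * N ^ d := by
          rw [← div_eq_inv_mul, le_div_iff₀ hpos2, one_mul]
          exact Real.rpow_le_rpow (by linarith) hsep hd.le
        refine hst1.trans ?_
        rw [mul_assoc]
        nlinarith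

lemma main_holder : ∃ C : ℝ≥0, ∀ s ∈ Ico (0:ℝ) 1, ∀ t ∈ Ico (0:ℝ) 1,
    dist s t ≤ C * dist (γ s) (γ t) ^ d := by
  have a4 := H.a4
  have a2 := H.a2
  have hpos : 0 < ((1/2 - a) * a) ^ d := Real.rpow_pos_of_pos (mul_pos (by linarith) (by linarith)) _
  have hpos2 : 0 < (1/2 - a) ^ d := Real.rpow_pos_of_pos (by linarith) _
  refine ⟨NNReal.mk (2 * (((1/2 - a) * a) ^ d)⁻¹ * ((1/2 - a) ^ d)⁻¹) (by positivity), ?_⟩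
  have key : ∀ s ∈ Ico (0:ℝ) 1, ∀ t ∈ Ico (0:ℝ) 1, s < t →
      t - s ≤ 2 * (((1/2 - a) * a) ^ d)⁻¹ * ((1/2 - a) ^ d)⁻¹ * ‖γ s - γ t‖ ^ d := by
    intro s hs t ht hst
    obtain ⟨n, hn⟩ := exists_pow_lt_of_lt_one (sub_pos.2 hst) (show (1/4:ℝ) < 1 by norm_num)
    exact main_n H hd had hT hγ n s hs t ht hn.le
  intro s hs t ht
  rw [NNReal.coe_mk]
  rcases lt_trichotomy s t with h1 | h1 | h1
  · rw [dist_comm, Real.dist_eq, abs_of_pos (sub_pos.2 h1), dist_eq_norm]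
    exact key s hs t ht h1
  · subst h1; rw [dist_self, dist_self, Real.zero_rpow hd.ne', mul_zero]
  · rw [Real.dist_eq, abs_of_pos (sub_pos.2 h1), dist_comm, dist_eq_norm]
    exact key t ht s hs h1

lemma dim_lower {K : Set ℂ} (hK : ∀ t, γ t ∈ K) : ENNReal.ofReal d ≤ dimH K := by
  obtain ⟨C, hC⟩ := main_holder H hd had hT hγ
  have hinj : InjOn γ (Ico (0:ℝ) 1) := by
    intro s hs t ht hst
    have := hC s hs t ht
    rw [hst, dist_self, Real.zero_rpow hd.ne', mul_zero] at this
    exact dist_le_zero.1 this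
  have hl := hinj.leftInvOn_invFunOn
  have hhol : HolderOnWith C d.toNNReal (Function.invFunOn γ (Ico (0:ℝ) 1)) (γ '' Ico (0:ℝ) 1) := by
    rintro _ ⟨s, hs, rfl⟩ _ ⟨t, ht, rfl⟩
    rw [hl hs, hl ht, Real.coe_toNNReal _ hd.le, edist_dist, edist_dist,
      ENNReal.ofReal_rpow_of_nonneg dist_nonneg hd.le, ← ENNReal.ofReal_coe_nnreal,
      ← ENNReal.ofReal_mul (NNReal.coe_nonneg C)]
    exact ENNReal.ofReal_le_ofReal (hC s hs t ht)
  have h1 := hhol.dimH_image_le (Real.toNNReal_pos.2 hd)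
  rw [hl.image_image] at h1
  have h2 : dimH (Ico (0:ℝ) 1) = 1 := by
    have := Real.dimH_of_nonempty_interior (E := ℝ) (s := Ico (0:ℝ) 1) (by simp [interior_Ico])
    simpa using this
  rw [h2] at h1
  have h3 : dimH (γ '' Ico (0:ℝ) 1) ≤ dimH K := dimH_mono (by rintro _ ⟨t, _, rfl⟩; exact hK t)
  have h4 := h1.trans (ENNReal.div_le_div_right h3 _)
  rw [ENNReal.le_div_iff_mul_le (Or.inl (by simpa using hd)) (Or.inl (by simp)), one_mul] at h4
  exact h4
end holder

def kcov (a h : ℝ) (K : Set ℂ) : (n : ℕ) → (Fin n → Fin 4) → Set ℂ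
  | 0 => fun _ => K
  | n + 1 => fun w => kg a h (w 0) '' kcov a h K n (Fin.tail w)

lemma dim_upper {a h d : ℝ} (H : Good a h) (hd : 0 < d) (had : a ^ d = 1/4) {K : Set ℂ}
    (hc : IsCompact K) (hK : K = ⋃ i : Fin 4, kg a h i '' K) : dimH K ≤ ENNReal.ofReal d := by
  have a4 := H.a4
  have a2 := H.a2
  have ha0 : 0 < a := by linarith
  set D := Metric.ediam K with hD
  have hDt : D ≠ ∞ := hc.isBounded.ediam_ne_top
  have hlip : ∀ i, LipschitzWith (Real.toNNReal a) (kg a h i) := by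
    intro i
    apply LipschitzWith.of_dist_le_mul
    intro x y
    rw [dist_eq_norm, dist_kg H, ← dist_eq_norm, Real.coe_toNNReal _ ha0.le]
  have hdiam : ∀ n w, Metric.ediam (kcov a h K n w) ≤ ENNReal.ofReal a ^ n * D := by
    intro n
    induction n with
    | zero => intro w; simp [kcov, hD]
    | succ n ih =>
      intro w
      refine ((hlip (w 0)).ediam_image_le _).trans ?_
      rw [pow_succ', mul_assoc]
      exact mul_le_mul_right (ih _) _
  have hcov : ∀ n, K ⊆ ⋃ w, kcov a h K n w := by
    intro n
    induction n with
    | zero => intro x hx; exact mem_iUnion.2 ⟨Fin.elim0, hx⟩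
    | succ n ih =>
      intro x hx
      rw [hK] at hx
      obtain ⟨i, y, hy, rfl⟩ := mem_iUnion.1 hx
      obtain ⟨w, hw⟩ := mem_iUnion.1 (ih hy)
      refine mem_iUnion.2 ⟨Fin.cons i w, ?_⟩
      simp only [kcov, Fin.cons_zero, Fin.tail_cons]
      exact ⟨y, hw, rfl⟩
  have htend : Tendsto (fun n : ℕ => ENNReal.ofReal a ^ n * D) atTop (𝓝 0) := by
    have := ENNReal.Tendsto.mul_const (b := D)
      (ENNReal.tendsto_pow_atTop_nhds_zero_of_lt_one
        (show ENNReal.ofReal a < 1 by rw [ENNReal.ofReal_lt_one]; linarith)) (Or.inr hDt)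
    simpa using this
  have hmeas := Measure.hausdorffMeasure_le_liminf_sum (ι := fun n : ℕ => (Fin n → Fin 4)) d K
    (fun n => ENNReal.ofReal a ^ n * D) htend (fun n w => kcov a h K n w)
    (Eventually.of_forall hdiam) (Eventually.of_forall hcov)
  have hbound : ∀ n : ℕ, ∑ w : Fin n → Fin 4, Metric.ediam (kcov a h K n w) ^ d ≤ D ^ d := by
    intro n
    calc _ ≤ ∑ w : Fin n → Fin 4, (ENNReal.ofReal a ^ n * D) ^ d :=
          Finset.sum_le_sum (fun w _ => ENNReal.rpow_le_rpow (hdiam n w) hd.le)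
      _ = (4 : ℝ≥0∞) ^ n * ((ENNReal.ofReal a ^ n * D) ^ d) := by simp
      _ = D ^ d := by
          rw [ENNReal.mul_rpow_of_nonneg _ _ hd.le, ← mul_assoc]
          have : (ENNReal.ofReal a ^ n) ^ d = ((4:ℝ≥0∞)⁻¹) ^ n := by
            rw [← ENNReal.rpow_natCast, ← ENNReal.rpow_mul, mul_comm, ENNReal.rpow_mul,
              ENNReal.ofReal_rpow_of_pos ha0, had, ENNReal.rpow_natCast]
            congr 1
            rw [one_div, ENNReal.ofReal_inv_of_pos (by norm_num)]; simp
          rw [this, ← mul_pow, ENNReal.mul_inv_cancel (by norm_num) (by norm_num), one_pow, one_mul]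
  have hfin : μH[d] K ≤ D ^ d := by
    refine hmeas.trans ?_
    refine liminf_le_of_le (by isBoundedDefault) ?_
    intro b hb
    obtain ⟨n, hn⟩ := hb.exists
    exact hn.trans (hbound n)
  have hne : μH[(d.toNNReal : ℝ)] K ≠ ∞ := by
    rw [Real.coe_toNNReal _ hd.le]
    exact ne_top_of_le_ne_top (ENNReal.rpow_ne_top_of_nonneg hd.le hDt) hfin
  exact dimH_le_of_hausdorffMeasure_ne_top hne

/-- The Hausdorff dimension of the Koch curve `K_α`, the unique nonempty compact set
invariant under `Ψ_α`, equals `log 4 / log α`. -/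
theorem stmt_5 (α : ℝ) (hα : 2 < α ∧ α < 4) (K : Set ℂ)
    (hK : K.Nonempty ∧ IsCompact K ∧ K = ⋃ i : Fin 4, psi α i '' K) :
    dimH K = ENNReal.ofReal (Real.log 4 / Real.log α) := by
  obtain ⟨h2, h4⟩ := hα
  obtain ⟨hn, hc, hK⟩ := hK
  simp_rw [psi_eq_kg α h2 h4] at hK
  have hα0 : 0 < α := by linarith
  have a4 : 1/4 < 1/α := one_div_lt_one_div_of_lt hα0 h4
  have a2 : 1/α < 1/2 := one_div_lt_one_div_of_lt (by norm_num) h2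
  have H : Good (1/α) (Real.sqrt (1/α - 1/4)) :=
    ⟨Real.sqrt_pos.2 (by linarith), a4, a2, Real.sq_sqrt (by linarith)⟩
  have hl : 0 < Real.log α := Real.log_pos (by linarith)
  have hd : 0 < Real.log 4 / Real.log α := div_pos (Real.log_pos (by norm_num)) hl
  have had : (1/α) ^ (Real.log 4 / Real.log α) = 1/4 := by
    rw [Real.rpow_def_of_pos (by positivity), one_div, Real.log_inv]
    have : -Real.log α * (Real.log 4 / Real.log α) = - Real.log 4 := by field_simp
    rw [this, Real.exp_neg, Real.exp_log (by norm_num)]; norm_num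
  obtain ⟨γ, hγK, hγ⟩ := exists_gamma H hn hc hK
  exact le_antisymm (dim_upper H hd had hc hK)
    (dim_lower H hd had (fun t => K_tri H hc hK (hγK t)) hγ hγK)
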